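/- If the allocation set is swappable, then there exists a mixed allocation that is both Pareto Efficient and envy-free. -/

import Mathlib

def ScarfDom {I X : Type} (r : I → X → ℕ) (τ : Finset X) : Prop :=
  ∀ y, ∃ i, ∀ x ∈ τ, r i y ≤ r i x

def ScarfTop {I X : Type} (r : I → X → ℕ) (a : I → X) (k : I) (x : X) : Prop :=
  (∀ l, l ≠ k → r l (a l) < r l x) ∧
    ∀ y, (∀ l, l ≠ k → r l (a l) < r l y) → r k y ≤ r k x

lemma scarf_door {I X : Type} [Fintype I] [DecidableEq I] [Fintype X] [DecidableEq X]
    (r : I → X → ℕ) (hr : ∀ i, Function.Injective (r i)) (σ : Finset X) (hσ : σ.Nonempty)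
    (hcard : σ.card + 1 = Fintype.card I) (hdom : ScarfDom r σ) :
    ∃ a : I → X, (∀ i, a i ∈ σ ∧ ∀ x ∈ σ, r i (a i) ≤ r i x) ∧ ∃ i j, i ≠ j ∧ a i = a j ∧
      (∀ x, (x ∉ σ ∧ ScarfDom r (insert x σ)) ↔ (ScarfTop r a i x ∨ ScarfTop r a j x)) := by
  have h1 : ∀ i, ∃ z, z ∈ σ ∧ ∀ x ∈ σ, r i z ≤ r i x := fun i =>
    Finset.exists_min_image σ (r i) hσ
  choose a ha hmin using h1
  have hd : ∀ y, ∃ i, r i y ≤ r i (a i) := fun y => by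
    obtain ⟨i, hi⟩ := hdom y
    exact ⟨i, hi _ (ha i)⟩
  have hsurj : ∀ x ∈ σ, ∃ i, a i = x := fun x hx => by
    obtain ⟨i, hi⟩ := hdom x
    exact ⟨i, hr i (le_antisymm (hmin i x hx) (hi _ (ha i)))⟩
  obtain ⟨i, -, j, -, hij, haij⟩ : ∃ i ∈ (Finset.univ : Finset I), ∃ j ∈ (Finset.univ : Finset I),
      i ≠ j ∧ a i = a j := by
    apply Finset.exists_ne_map_eq_of_card_lt_of_maps_to (t := σ)
    · rw [Finset.card_univ]; omega
    · intro i _; exact ha i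
  -- surjectivity survives when one of the two doubled indices is removed
  have hs2 : ∀ k, (k = i ∨ k = j) → ∀ x ∈ σ, ∃ l, l ≠ k ∧ a l = x := by
    intro k hk x hx
    obtain ⟨l, hl⟩ := hsurj x hx
    by_cases hlk : l = k
    · rcases hk with hk | hk
      · exact ⟨j, by rw [hk]; exact hij.symm, by rw [← hl, hlk, hk, haij]⟩
      · exact ⟨i, by rw [hk]; exact hij, by rw [← hl, hlk, hk, haij]⟩
    · exact ⟨l, hlk, hl⟩
  refine ⟨a, fun i => ⟨ha i, hmin i⟩, i, j, hij, haij, ?_⟩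
  have back : ∀ k, (k = i ∨ k = j) → ∀ x, ScarfTop r a k x → x ∉ σ ∧ ScarfDom r (insert x σ) := by
    intro k hk x ⟨hx1, hx2⟩
    have hxk : r k x ≤ r k (a k) := by
      obtain ⟨l, hl⟩ := hd x
      by_cases hlk : l = k
      · rwa [hlk] at hl
      · exact absurd (hx1 l hlk) (by omega)
    refine ⟨?_, ?_⟩
    · intro hx
      obtain ⟨l, hl, hl2⟩ := hs2 k hk x hx
      have := hx1 l hl
      rw [hl2] at this
      omega
    · intro y
      by_cases hy : ∀ l, l ≠ k → r l (a l) < r l y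
      · refine ⟨k, fun z hz => ?_⟩
        have h3 := hx2 y hy
        rcases Finset.mem_insert.1 hz with rfl | hz
        · exact h3
        · have := hmin k z hz
          omega
      · push Not at hy
        obtain ⟨l, hl, hl2⟩ := hy
        refine ⟨l, fun z hz => ?_⟩
        rcases Finset.mem_insert.1 hz with rfl | hz
        · have := hx1 l hl
          omega
        · have := hmin l z hz
          omega
  intro x
  constructor
  · rintro ⟨hx, hdx⟩
    have h1 : ∀ i, ∃ z, z ∈ insert x σ ∧ ∀ w ∈ insert x σ, r i z ≤ r i w := fun i =>
      Finset.exists_min_image _ (r i) (Finset.insert_nonempty _ _)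
    choose b hb hbmin using h1
    have hbs : ∀ w ∈ insert x σ, ∃ i, b i = w := fun w hw => by
      obtain ⟨i, hi⟩ := hdx w
      exact ⟨i, hr i (le_antisymm (hbmin i w hw) (hi _ (hb i)))⟩
    have hbinj : Function.Injective b := by
      have : (Finset.univ.image b) = insert x σ := by
        ext w
        simp only [Finset.mem_image, Finset.mem_univ, true_and]
        constructor
        · rintro ⟨l, rfl⟩; exact hb l
        · exact hbs w
      have hc : (Finset.univ.image b).card = (Finset.univ : Finset I).card := by
        rw [this, Finset.card_insert_of_notMem hx, Finset.card_univ, hcard]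
      have := Finset.card_image_iff.1 hc
      exact fun p q h => this (by simp) (by simp) h
    obtain ⟨k, hk⟩ := hbs x (Finset.mem_insert_self _ _)
    have hne : ∀ l, l ≠ k → b l ∈ σ := fun l hl => by
      rcases Finset.mem_insert.1 (hb l) with h | h
      · exact absurd (hbinj (h.trans hk.symm)) hl
      · exact h
    have hab : ∀ l, l ≠ k → b l = a l := fun l hl =>
      hr l (le_antisymm (hbmin l _ (Finset.mem_insert_of_mem (ha l))) (hmin l _ (hne l hl)))
    have hkk : k = i ∨ k = j := by
      by_contra hcon
      push Not at hcon
      have := hab i (Ne.symm hcon.1)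
      have h2 := hab j (Ne.symm hcon.2)
      exact hij (hbinj (by rw [this, h2, haij]))
    have hM : ∀ l, l ≠ k → r l (a l) < r l x := fun l hl => by
      have h3 := hbmin l x (Finset.mem_insert_self _ _)
      rw [hab l hl] at h3
      refine lt_of_le_of_ne h3 (fun h => hx ?_)
      rw [← hr l h]
      exact ha l
    have htop : ScarfTop r a k x := by
      refine ⟨hM, fun y hy => ?_⟩
      obtain ⟨l, hl⟩ := hdx y
      by_cases hlk : l = k
      · subst hlk; exact hl x (Finset.mem_insert_self _ _)
      · have := hl (a l) (Finset.mem_insert_of_mem (ha l))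
        have := hy l hlk
        omega
    rcases hkk with rfl | rfl
    · exact Or.inl htop
    · exact Or.inr htop
  · rintro (h | h)
    · exact back i (Or.inl rfl) x h
    · exact back j (Or.inr rfl) x h

lemma scarfTop_exists {I X : Type} [Fintype X] (r : I → X → ℕ) (a : I → X) (k : I)
    (z : X) (hz : ∀ l, l ≠ k → r l (a l) < r l z) : ∃ x, ScarfTop r a k x := by
  classical
  obtain ⟨x, hx, hx2⟩ := Finset.exists_max_image
    (Finset.univ.filter (fun z => ∀ l, l ≠ k → r l (a l) < r l z)) (r k) ⟨z, by simpa using hz⟩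
  refine ⟨x, by simpa using hx, fun y hy => hx2 y (by simpa using hy)⟩

lemma scarfTop_unique {I X : Type} (r : I → X → ℕ) (hr : ∀ i, Function.Injective (r i))
    (a : I → X) (k : I) (x y : X) (hx : ScarfTop r a k x) (hy : ScarfTop r a k y) : x = y :=
  hr k (le_antisymm (hy.2 x hx.1) (hx.2 y hy.1))

open Classical in
/-- parity of the number of rooms at a typed door -/
lemma scarf_door_even {I X : Type} [Fintype I] [Fintype X]
    (r : I → X → ℕ) (hr : ∀ i, Function.Injective (r i)) (s : I → X)
    (h2 : ∀ i x, (∀ j, x ≠ s j) → ∀ j, j ≠ i → r i x < r i (s j))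
    (σ : Finset X) (hcard : σ.card + 1 = Fintype.card I) (z : X) (hz : z ∈ σ)
    (hzs : ∀ j, z ≠ s j) :
    Even (Finset.univ.filter (fun x => x ∉ σ ∧ ScarfDom r (insert x σ))).card := by
  by_cases hdom : ScarfDom r σ
  · obtain ⟨a, ha, i, j, hij, haij, hiff⟩ := scarf_door r hr σ ⟨z, hz⟩ hcard hdom
    have key : ∀ k, ∃ x, ScarfTop r a k x := fun k => by
      apply scarfTop_exists r a k (s k)
      intro l hl
      exact lt_of_le_of_lt ((ha l).2 z hz) (h2 l z hzs k (Ne.symm hl))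
    obtain ⟨x, hx⟩ := key i
    obtain ⟨y, hy⟩ := key j
    have hxy : x ≠ y := by
      rintro rfl
      obtain ⟨l, hl⟩ := hdom x
      have h3 := hl (a l) (ha l).1
      by_cases hli : l = i
      · subst hli
        have := hy.1 l hij
        omega
      · have := hx.1 l hli
        omega
    have : (Finset.univ.filter (fun x => x ∉ σ ∧ ScarfDom r (insert x σ))) = {x, y} := by
      ext w
      simp only [Finset.mem_filter, Finset.mem_univ, true_and, Finset.mem_insert,
        Finset.mem_singleton]
      rw [hiff]
      constructor
      · rintro (h | h)
        · exact Or.inl (scarfTop_unique r hr a i _ _ h hx)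
        · exact Or.inr (scarfTop_unique r hr a j _ _ h hy)
      · rintro (rfl | rfl)
        · exact Or.inl hx
        · exact Or.inr hy
    rw [this, Finset.card_pair hxy]
    exact even_two
  · have : (Finset.univ.filter (fun x => x ∉ σ ∧ ScarfDom r (insert x σ))) = ∅ := by
      ext w
      simp only [Finset.mem_filter, Finset.mem_univ, true_and, Finset.notMem_empty, iff_false]
      rintro ⟨-, h⟩
      apply hdom
      intro y
      obtain ⟨l, hl⟩ := h y
      exact ⟨l, fun x hx => hl x (Finset.mem_insert_of_mem hx)⟩
    rw [this]; simp

open Classical in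
lemma scarf_door_special {I X : Type} [Fintype I] [Fintype X]
    (r : I → X → ℕ) (hr : ∀ i, Function.Injective (r i)) (s : I → X)
    (hs : Function.Injective s)
    (h2 : ∀ i x, (∀ j, x ≠ s j) → ∀ j, j ≠ i → r i x < r i (s j))
    (h1 : ∀ i x, x ≠ s i → r i (s i) < r i x) (i0 : I) (σ : Finset X)
    (hσ : σ = (Finset.univ.erase i0).image s) :
    (Finset.univ.filter (fun x => x ∉ σ ∧ ScarfDom r (insert x σ))).card = 1 := by
  have hcard : σ.card + 1 = Fintype.card I := by
    rw [hσ, Finset.card_image_of_injective _ hs, Finset.card_erase_of_mem (Finset.mem_univ _),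
      Finset.card_univ]
    have : 0 < Fintype.card I := Fintype.card_pos_iff.2 ⟨i0⟩
    omega
  have hmem : ∀ l, l ≠ i0 → s l ∈ σ := fun l hl => by
    rw [hσ]; exact Finset.mem_image_of_mem _ (by simpa using hl)
  have hmem2 : ∀ x ∈ σ, ∃ l, l ≠ i0 ∧ s l = x := fun x hx => by
    rw [hσ] at hx
    simpa using hx
  rw [Finset.card_eq_one]
  by_cases hne : σ.Nonempty
  · have hdom : ScarfDom r σ := by
      intro y
      by_cases hy : ∃ j, j ≠ i0 ∧ y = s j
      · obtain ⟨j, hj, rfl⟩ := hy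
        refine ⟨j, fun x hx => ?_⟩
        by_cases hxj : x = s j
        · rw [hxj]
        · exact (h1 j x hxj).le
      · refine ⟨i0, fun x hx => ?_⟩
        obtain ⟨l, hl, rfl⟩ := hmem2 x hx
        by_cases hy0 : y = s i0
        · rw [hy0]
          exact (h1 i0 _ (fun h => hl (hs h))).le
        · refine (h2 i0 y (fun j hj => ?_) l hl).le
          by_cases hji : j = i0
          · exact hy0 (by rw [hj, hji])
          · exact hy ⟨j, hji, hj⟩
    obtain ⟨a, ha, i, j, hij, haij, hiff⟩ := scarf_door r hr σ hne hcard hdom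
    have has : ∀ l, l ≠ i0 → a l = s l := fun l hl => by
      by_contra hcon
      have := h1 l _ hcon
      have := (ha l).2 _ (hmem l hl)
      omega
    -- reduce to the case i = i0
    have main : ∀ j, j ≠ i0 → a j = a i0 → 
        (∃ x, ScarfTop r a i0 x) ∧ ∀ x, ¬ ScarfTop r a j x := by
      intro j hj haj
      refine ⟨scarfTop_exists r a i0 (s i0) (fun l hl => ?_), ?_⟩
      · rw [has l hl]
        exact h1 l _ (fun h => hl (hs h).symm)
      · rintro x ⟨hx, -⟩
        have hx0 := hx i0 (Ne.symm hj)
        rw [← haj, has j hj] at hx0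
        by_cases hxs : ∃ l, x = s l
        · obtain ⟨l, rfl⟩ := hxs
          by_cases hl : l = i0
          · subst hl
            have := h1 l (s j) (fun h => hj (hs h))
            omega
          · by_cases hlj : l = j
            · subst hlj; omega
            · have := hx l hlj
              rw [has l hl] at this
              omega
        · push Not at hxs
          have := h2 i0 x hxs j hj
          omega
    have hor : i = i0 ∨ j = i0 := by
      by_contra hcon
      push Not at hcon
      rw [has i hcon.1, has j hcon.2] at haij
      exact hij (hs haij)
    have fin : ∀ j, j ≠ i0 → a j = a i0 → 
        (∀ x, (x ∉ σ ∧ ScarfDom r (insert x σ)) ↔ (ScarfTop r a i0 x ∨ ScarfTop r a j x)) →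
        ∃ x, (Finset.univ.filter (fun x => x ∉ σ ∧ ScarfDom r (insert x σ))) = {x} := by
      intro j hj haj hiff
      obtain ⟨⟨x, hx⟩, hno⟩ := main j hj haj
      refine ⟨x, ?_⟩
      ext w
      simp only [Finset.mem_filter, Finset.mem_univ, true_and, Finset.mem_singleton]
      rw [hiff]
      constructor
      · rintro (h | h)
        · exact scarfTop_unique r hr a i0 _ _ h hx
        · exact absurd h (hno w)
      · rintro rfl
        exact Or.inl hx
    rcases hor with rfl | rfl
    · exact fin j (Ne.symm hij) haij.symm hiff
    · exact fin i hij haij (fun x => (hiff x).trans or_comm)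
  · rw [Finset.not_nonempty_iff_eq_empty] at hne
    have hall : ∀ i : I, i = i0 := fun i => by
      by_contra h
      have := hmem i h
      rw [hne] at this
      simp at this
    obtain ⟨x, -, hx⟩ := Finset.exists_max_image (Finset.univ : Finset X) (r i0) ⟨s i0, by simp⟩
    refine ⟨x, ?_⟩
    ext w
    rw [hne]
    simp only [Finset.mem_filter, Finset.mem_univ, true_and, Finset.mem_singleton,
      Finset.notMem_empty, not_false_eq_true]
    constructor
    · intro h
      obtain ⟨l, hl⟩ := h x
      rw [hall l] at hl
      exact hr i0 (le_antisymm (hx w (by simp)) (hl w (by simp)))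
    · rintro rfl y
      refine ⟨i0, fun z hz => ?_⟩
      simp at hz
      subst hz
      exact hx y (by simp)

open Classical in
lemma scarf_room_even {I X : Type} [Fintype I] [Fintype X] (c : X → I) (i0 : I) (τ : Finset X)
    (hc : τ.card = Fintype.card I) (hτ : τ.image c ≠ Finset.univ) :
    Even ((Finset.univ.filter (fun σ : Finset X =>
      σ.image c = Finset.univ.erase i0 ∧ σ.card + 1 = Fintype.card I)).filter
        (fun σ => σ ⊆ τ)).card := by
  by_cases hex : ∃ σ : Finset X, (σ.image c = Finset.univ.erase i0 ∧ 
      σ.card + 1 = Fintype.card I) ∧ σ ⊆ τ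
  · obtain ⟨σ, ⟨hσ, hσc⟩, hsub⟩ := hex
    have inj : ∀ σ : Finset X, σ.image c = Finset.univ.erase i0 → σ.card + 1 = Fintype.card I →
        ∀ x ∈ σ, ∀ y ∈ σ, c x = c y → x = y := by
      intro σ h1 h2
      have : (σ.image c).card = σ.card := by
        rw [h1, Finset.card_erase_of_mem (Finset.mem_univ _), Finset.card_univ]
        omega
      intro x hx y hy h
      exact Finset.card_image_iff.1 this hx hy h
    obtain ⟨x, hx, hxτ⟩ : ∃ x, x ∉ σ ∧ insert x σ = τ := by
      have := Finset.exists_eq_insert_iff.2 ⟨hsub, by omega⟩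
      obtain ⟨x, hx, h⟩ := this
      exact ⟨x, hx, h⟩
    have hcx : c x ≠ i0 := by
      intro h
      apply hτ
      rw [← hxτ, Finset.image_insert, hσ, h, Finset.insert_erase (Finset.mem_univ _)]
    obtain ⟨y, hy, hyx⟩ : ∃ y ∈ σ, c y = c x := by
      have : c x ∈ σ.image c := by rw [hσ]; simpa using hcx
      simpa using this
    have hxy : x ≠ y := by rintro rfl; exact hx hy
    have himg : (insert x (σ.erase y)).image c = Finset.univ.erase i0 := by
      rw [← hσ]
      conv_rhs => rw [← Finset.insert_erase hy]
      rw [Finset.image_insert, Finset.image_insert, hyx]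
    have hcd : (insert x (σ.erase y)).card = σ.card := by
      rw [Finset.card_insert_of_notMem (by simp [hx]), Finset.card_erase_of_mem hy]
      have : 0 < σ.card := Finset.card_pos.2 ⟨y, hy⟩
      omega
    have hset : ((Finset.univ.filter (fun σ : Finset X =>
      σ.image c = Finset.univ.erase i0 ∧ σ.card + 1 = Fintype.card I)).filter
        (fun σ => σ ⊆ τ)) = {σ, insert x (σ.erase y)} := by
      ext ρ
      simp only [Finset.mem_filter, Finset.mem_univ, true_and, Finset.mem_insert,
        Finset.mem_singleton]
      constructor
      · rintro ⟨⟨hρ, hρc⟩, hρτ⟩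
        by_cases hxρ : x ∈ ρ
        · right
          apply Finset.eq_of_subset_of_card_le
          · intro w hw
            have hw2 := hρτ hw
            rw [← hxτ] at hw2
            by_cases hwx : w = x
            · simp [hwx]
            · have hwy : w ≠ y := by
                rintro rfl
                exact hxy (inj ρ hρ hρc x hxρ w hw hyx.symm)
              simp [hwx, hwy] at hw2 ⊢
              exact hw2
          · omega
        · left
          apply Finset.eq_of_subset_of_card_le
          · intro w hw
            have hw2 := hρτ hw
            rw [← hxτ] at hw2
            rcases Finset.mem_insert.1 hw2 with h | h
            · exact absurd (h ▸ hw) hxρ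
            · exact h
          · omega
      · rintro (rfl | rfl)
        · exact ⟨⟨hσ, hσc⟩, hsub⟩
        · refine ⟨⟨himg, by omega⟩, ?_⟩
          rw [← hxτ]
          exact Finset.insert_subset_insert _ (Finset.erase_subset _ _)
    rw [hset, Finset.card_pair]
    · exact even_two
    · intro h
      apply hx
      rw [h]; simp
  · have : ((Finset.univ.filter (fun σ : Finset X =>
      σ.image c = Finset.univ.erase i0 ∧ σ.card + 1 = Fintype.card I)).filter
        (fun σ => σ ⊆ τ)) = ∅ := by
      ext ρ
      simp only [Finset.mem_filter, Finset.mem_univ, true_and, Finset.notMem_empty, iff_false]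
      exact fun h => hex ⟨ρ, h⟩
    rw [this]; simp

open Classical in
theorem scarf {I X : Type} [Fintype I] [Fintype X]
    (r : I → X → ℕ) (hr : ∀ i, Function.Injective (r i)) (s : I → X)
    (hs : Function.Injective s)
    (h2 : ∀ i x, (∀ j, x ≠ s j) → ∀ j, j ≠ i → r i x < r i (s j))
    (h1 : ∀ i x, x ≠ s i → r i (s i) < r i x) (i0 : I)
    (c : X → I) (hcs : ∀ i, c (s i) = i) :
    ∃ τ : Finset X, ScarfDom r τ ∧ τ.card = Fintype.card I ∧ ∀ i, ∃ w ∈ τ, c w = i := by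
  suffices h : ∃ τ : Finset X, ScarfDom r τ ∧ τ.card = Fintype.card I ∧
      τ.image c = Finset.univ by
    obtain ⟨τ, ha, hb, hc⟩ := h
    refine ⟨τ, ha, hb, fun i => ?_⟩
    have : i ∈ τ.image c := by rw [hc]; exact Finset.mem_univ i
    exact Finset.mem_image.1 this
  by_contra hcon
  push Not at hcon
  set Rooms := Finset.univ.filter (fun τ : Finset X => ScarfDom r τ ∧ τ.card = Fintype.card I)
    with hRooms
  set Doors := Finset.univ.filter (fun σ : Finset X =>
      σ.image c = Finset.univ.erase i0 ∧ σ.card + 1 = Fintype.card I) with hDoors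
  have hcount := Finset.sum_card_bipartiteAbove_eq_sum_card_bipartiteBelow
    (s := Rooms) (t := Doors) (fun τ σ => σ ⊆ τ)
  have hL : Even (∑ τ ∈ Rooms, (Finset.bipartiteAbove (fun τ σ => σ ⊆ τ) Doors τ).card) := by
    apply Finset.even_sum
    intro τ hτ
    have hτ' : ScarfDom r τ ∧ τ.card = Fintype.card I := by simpa [hRooms] using hτ
    exact scarf_room_even c i0 τ hτ'.2 (hcon τ hτ'.1 hτ'.2)
  have hdeg : ∀ σ ∈ Doors, (Finset.bipartiteBelow (fun τ σ => σ ⊆ τ) Rooms σ).card =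
      (Finset.univ.filter (fun x => x ∉ σ ∧ ScarfDom r (insert x σ))).card := by
    intro σ hσ
    have hσ' : σ.image c = Finset.univ.erase i0 ∧ σ.card + 1 = Fintype.card I := by
      simpa [hDoors] using hσ
    symm
    apply Finset.card_bij (fun x _ => insert x σ)
    · intro x hx
      simp only [Finset.mem_filter, Finset.mem_univ, true_and] at hx
      simp only [Finset.bipartiteBelow, hRooms, Finset.mem_filter, Finset.mem_univ, true_and]
      refine ⟨⟨hx.2, ?_⟩, Finset.subset_insert _ _⟩
      rw [Finset.card_insert_of_notMem hx.1, hσ'.2]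
    · intro x hx y hy h
      simp only [Finset.mem_filter, Finset.mem_univ, true_and] at hx hy
      have : x ∈ insert y σ := by rw [← h]; simp
      rcases Finset.mem_insert.1 this with h | h
      · exact h
      · exact absurd h hx.1
    · intro τ hτ
      simp only [Finset.bipartiteBelow, hRooms, Finset.mem_filter, Finset.mem_univ,
        true_and] at hτ
      obtain ⟨x, hx, h⟩ := Finset.exists_eq_insert_iff.2 ⟨hτ.2, by omega⟩
      exact ⟨x, by simp [hx, h, hτ.1.1], h⟩
  have hσ0 : (Finset.univ.erase i0).image s ∈ Doors := by
    simp only [hDoors, Finset.mem_filter, Finset.mem_univ, true_and]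
    constructor
    · rw [Finset.image_image]
      have : c ∘ s = id := by ext i; simp [hcs]
      rw [this, Finset.image_id]
    · rw [Finset.card_image_of_injective _ hs, Finset.card_erase_of_mem (Finset.mem_univ _),
        Finset.card_univ]
      have : 0 < Fintype.card I := Fintype.card_pos_iff.2 ⟨i0⟩
      omega
  have hR : Odd (∑ σ ∈ Doors, (Finset.bipartiteBelow (fun τ σ => σ ⊆ τ) Rooms σ).card) := by
    rw [← Finset.add_sum_erase _ _ hσ0]
    apply Odd.add_even
    · rw [hdeg _ hσ0, scarf_door_special r hr s hs h2 h1 i0 _ rfl]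
      exact odd_one
    · apply Finset.even_sum
      intro σ hσ
      rw [Finset.mem_erase] at hσ
      rw [hdeg σ hσ.2]
      have hσ' : σ.image c = Finset.univ.erase i0 ∧ σ.card + 1 = Fintype.card I := by
        simpa [hDoors] using hσ.2
      by_cases hz : ∃ z ∈ σ, ∀ j, z ≠ s j
      · obtain ⟨z, hz, hzs⟩ := hz
        exact scarf_door_even r hr s h2 σ hσ'.2 z hz hzs
      · exfalso
        push Not at hz
        apply hσ.1
        apply Finset.eq_of_subset_of_card_le
        · intro w hw
          obtain ⟨j, hj⟩ := hz w hw
          have : c w ∈ σ.image c := Finset.mem_image_of_mem _ hw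
          rw [hσ'.1, hj, hcs] at this
          rw [hj]
          exact Finset.mem_image_of_mem _ this
        · refine Finset.card_image_le.trans ?_
          rw [Finset.card_erase_of_mem (Finset.mem_univ _), Finset.card_univ]
          omega
  rw [hcount] at hL
  exact (Nat.not_even_iff_odd.2 hR) hL

lemma grid_scarf {n : ℕ} (i0 : Fin n) (N : ℕ) (lab : (Fin n → ℕ) → Fin n) :
    ∃ x : Fin n → ℕ, ∑ l, x l = N ∧ ∀ i, x i ≤ n ∨ ∃ x' : Fin n → ℕ, ∑ l, x' l = N ∧
      (∀ l, x' l ≤ x l + n ∧ x l ≤ x' l + n) ∧ lab x' = i := by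
  classical
  let T := {x : Fin n → Fin (N + 1) // ∑ i, (x i : ℕ) = N}
  let X := T ⊕ Fin n
  let v : T → Fin n → ℕ := fun x i => (x.1 i : ℕ)
  have hvsum : ∀ x, ∑ i, v x i = N := fun x => x.2
  let f : Fin n → X → ℕ := fun i => Sum.elim (fun x => v x i + 1) (fun j => if j = i then 0 else N + 2)
  let e := Fintype.equivFin X
  let K := Fintype.card X
  let r : Fin n → X → ℕ := fun i x => f i x * K + (e x : ℕ)
  have hlt : ∀ i x y, f i x < f i y → r i x < r i y := by
    intro i x y h
    have h1 : (f i x + 1) * K ≤ f i y * K := Nat.mul_le_mul_right _ h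
    have h2 : (e x : ℕ) < K := (e x).2
    have h3 : (f i x + 1) * K = f i x * K + K := by ring
    show f i x * K + (e x : ℕ) < f i y * K + (e y : ℕ)
    omega
  have hle : ∀ i x y, r i x ≤ r i y → f i x ≤ f i y := by
    intro i x y h
    by_contra hc
    have := hlt i y x (by omega)
    omega
  have hr : ∀ i, Function.Injective (r i) := by
    intro i x y h
    have h1 : f i x = f i y := le_antisymm (hle i x y h.le) (hle i y x h.ge)
    have h2 : f i x * K + (e x : ℕ) = f i y * K + (e y : ℕ) := h
    rw [h1] at h2
    exact e.injective (Fin.ext (by omega))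
  have hvb : ∀ x i, v x i < N + 1 := fun x i => (x.1 i).2
  obtain ⟨τ, hdom, hcard, himg⟩ := scarf r hr (Sum.inr : Fin n → X) Sum.inr_injective
    (by
      rintro i (x | x) hx j hj
      · apply hlt
        have := hvb x i
        simp only [f, Sum.elim_inl, Sum.elim_inr, hj, if_false]
        omega
      · exact absurd rfl (hx x))
    (by
      rintro i (x | x) hx
      · apply hlt
        simp [f]
      · apply hlt
        have : x ≠ i := fun h => hx (by rw [h])
        simp [f, this]) i0
    (Sum.elim (fun x => lab (v x)) id) (fun i => rfl)
  have hne : τ.Nonempty := by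
    rw [← Finset.card_pos, hcard, Fintype.card_fin]
    exact i0.pos
  have h1 : ∀ i, ∃ z, z ∈ τ ∧ ∀ x ∈ τ, f i z ≤ f i x := fun i =>
    Finset.exists_min_image τ (f i) hne
  choose a ha hmin using h1
  have hb : N + 1 ≤ ∑ i, f i (a i) := by
    by_contra hcon
    let y : Fin n → ℕ := fun i => f i (a i) + if i = i0 then N - ∑ l, f l (a l) else 0
    have hy : ∑ i, y i = N := by
      simp only [y, Finset.sum_add_distrib, Finset.sum_ite_eq', Finset.mem_univ, if_true]
      omega
    have hyN : ∀ i, y i < N + 1 := fun i => by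
      have := Finset.single_le_sum (f := y) (fun _ _ => Nat.zero_le _) (Finset.mem_univ i)
      omega
    obtain ⟨i, hi⟩ := hdom (Sum.inl ⟨fun i => ⟨y i, hyN i⟩, hy⟩)
    have h3 := hle _ _ _ (hi _ (ha i))
    have h4 : f i (Sum.inl ⟨fun i => ⟨y i, hyN i⟩, hy⟩) = y i + 1 := rfl
    have h5 : f i (a i) ≤ y i := Nat.le_add_right _ _
    omega
  have hclose : ∀ x, Sum.inl x ∈ τ → ∀ i, f i (a i) ≤ v x i + 1 ∧ v x i ≤ f i (a i) + n - 1 := by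
    intro x hx
    have hb1 : ∀ i, f i (a i) ≤ v x i + 1 := fun i => hmin i _ hx
    intro i
    refine ⟨hb1 i, ?_⟩
    have hs : ∑ l, (v x l + 1 - f l (a l)) + ∑ l, f l (a l) = N + n := by
      rw [← Finset.sum_add_distrib, ← hvsum x]
      have : ∀ l ∈ (Finset.univ : Finset (Fin n)),
          v x l + 1 - f l (a l) + f l (a l) = v x l + 1 := fun l _ => by
        have := hb1 l
        omega
      rw [Finset.sum_congr rfl this, Finset.sum_add_distrib]
      simp
    have := Finset.single_le_sum (f := fun l => v x l + 1 - f l (a l))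
      (fun _ _ => Nat.zero_le _) (Finset.mem_univ i)
    omega
  have hcol : ∀ i, Sum.inr i ∈ τ ∨ ∃ x, Sum.inl x ∈ τ ∧ lab (v x) = i := by
    intro i
    obtain ⟨w, hw, hwi⟩ := himg i
    rcases w with x | j
    · exact Or.inr ⟨x, hw, hwi⟩
    · left
      have : j = i := hwi
      rwa [← this]
  have hslack : ∀ i, Sum.inr i ∈ τ → f i (a i) = 0 := by
    intro i hi
    have := hmin i _ hi
    simpa [f] using this
  obtain ⟨x, hx⟩ : ∃ x, Sum.inl x ∈ τ := by
    by_contra hcon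
    have : ∑ i, f i (a i) = 0 := Finset.sum_eq_zero (fun i _ => hslack i (by
      rcases hcol i with h | ⟨x, hx, -⟩
      · exact h
      · exact absurd ⟨x, hx⟩ hcon))
    omega
  refine ⟨v x, hvsum x, fun i => ?_⟩
  rcases hcol i with h | ⟨x', hx', hl⟩
  · left
    have := hslack i h
    have := hclose x hx i
    omega
  · right
    refine ⟨v x', hvsum x', fun l => ?_, hl⟩
    have := hclose x hx l
    have := hclose x' hx' l
    have := i0.pos
    omega

/-- Brouwer's fixed point theorem on the standard simplex. -/
theorem brouwer_simplex {n : ℕ} (i0 : Fin n) (F : (Fin n → ℝ) → (Fin n → ℝ)) (hF : Continuous F)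
    (hmap : ∀ x ∈ stdSimplex ℝ (Fin n), F x ∈ stdSimplex ℝ (Fin n)) :
    ∃ x ∈ stdSimplex ℝ (Fin n), F x = x := by
  classical
  have hcomp : IsCompact (stdSimplex ℝ (Fin n)) := isCompact_stdSimplex ℝ (Fin n)
  have hne : (stdSimplex ℝ (Fin n)).Nonempty := ⟨_, single_mem_stdSimplex ℝ i0⟩
  have hφ : Continuous (fun x : Fin n → ℝ => ∑ i, max 0 (x i - F x i)) := by fun_prop
  obtain ⟨x, hx, hxmin⟩ := hcomp.exists_isMinOn hne hφ.continuousOn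
  have hn0 : (0 : ℝ) < n := by exact_mod_cast i0.pos
  have happrox : ∀ δ > 0, ∃ z ∈ stdSimplex ℝ (Fin n), ∀ i, z i - F z i ≤ δ := by
    intro δ hδ
    have huc := hcomp.uniformContinuousOn_of_continuous hF.continuousOn
    rw [Metric.uniformContinuousOn_iff] at huc
    obtain ⟨ρ, hρ, huc⟩ := huc (δ / 2) (by positivity)
    obtain ⟨N, hN⟩ := exists_nat_gt (max (n / ρ) (n / (δ / 2)))
    have hN1 : n / ρ < N := lt_of_le_of_lt (le_max_left _ _) hN
    have hN2 : n / (δ / 2) < N := lt_of_le_of_lt (le_max_right _ _) hN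
    have hN0 : (0 : ℝ) < N := lt_trans (by positivity) hN1
    have hN1' : (n : ℝ) / N < ρ := by
      rw [div_lt_iff₀ hρ] at hN1
      rw [div_lt_iff₀ hN0]; linarith
    have hN2' : (n : ℝ) / N < δ / 2 := by
      rw [div_lt_iff₀ (by positivity)] at hN2
      rw [div_lt_iff₀ hN0]; linarith
    let sc : (Fin n → ℕ) → (Fin n → ℝ) := fun x i => (x i : ℝ) / N
    have hsc : ∀ x : Fin n → ℕ, ∑ l, x l = N → sc x ∈ stdSimplex ℝ (Fin n) := by
      intro x hx
      refine ⟨fun i => by positivity, ?_⟩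
      show ∑ i, (x i : ℝ) / N = 1
      rw [← Finset.sum_div, ← Nat.cast_sum, hx, div_self hN0.ne']
    have hlab : ∀ x : Fin n → ℕ, ∃ i, ∑ l, x l = N → sc x i ≤ F (sc x) i := by
      intro x
      by_cases hx : ∑ l, x l = N
      · by_contra hcon
        push Not at hcon
        have h1 := hsc x hx
        have h2 := hmap _ h1
        have := Finset.sum_lt_sum_of_nonempty (s := Finset.univ) ⟨i0, Finset.mem_univ _⟩
          (fun i _ => (hcon i).2)
        rw [h1.2, h2.2] at this
        exact lt_irrefl _ this
      · exact ⟨i0, fun h => absurd h hx⟩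
    choose lab hlab using hlab
    obtain ⟨x, hx, hxi⟩ := grid_scarf i0 N lab
    refine ⟨sc x, hsc x hx, fun i => ?_⟩
    rcases hxi i with h | ⟨x', hx', hcl, hl⟩
    · have h1 := (hmap _ (hsc x hx)).1 i
      have h2 : sc x i ≤ n / N := by
        show (x i : ℝ) / N ≤ n / N
        gcongr
      linarith
    · have hd : ∀ l, |sc x' l - sc x l| ≤ n / N := by
        intro l
        show |(x' l : ℝ) / N - x l / N| ≤ n / N
        rw [← sub_div, abs_div, abs_of_pos hN0]
        gcongr
        rw [abs_le]
        have h1 : (x' l : ℝ) ≤ x l + n := by exact_mod_cast (hcl l).1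
        have h2 : (x l : ℝ) ≤ x' l + n := by exact_mod_cast (hcl l).2
        constructor <;> linarith
      have hdist : dist (sc x') (sc x) < ρ := by
        refine lt_of_le_of_lt ?_ hN1'
        rw [dist_pi_le_iff (by positivity)]
        intro l
        rw [Real.dist_eq]
        exact hd l
      have h3 := huc _ (hsc x' hx') _ (hsc x hx) hdist
      have h4 : |F (sc x') i - F (sc x) i| < δ / 2 := by
        rw [← Real.dist_eq]
        exact lt_of_le_of_lt (dist_le_pi_dist _ _ i) h3
      have h5 := hlab x' hx'
      rw [hl] at h5
      have h6 := hd i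
      rw [abs_le] at h6
      rw [abs_lt] at h4
      linarith [h6.1, h4.2]
  have hle : ∑ i, max 0 (x i - F x i) ≤ 0 := by
    apply le_of_forall_pos_le_add
    intro ε hε
    obtain ⟨z, hz, hzi⟩ := happrox (ε / n) (by positivity)
    have h1 : ∑ i, max 0 (x i - F x i) ≤ ∑ i, max 0 (z i - F z i) := hxmin hz
    have h2 : ∑ i, max 0 (z i - F z i) ≤ ∑ i : Fin n, ε / n :=
      Finset.sum_le_sum (fun i _ => max_le (by positivity) (hzi i))
    have h3 : ∑ i : Fin n, ε / n = ε := by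
      simp
      field_simp
    linarith
  have hxF : ∀ i, x i ≤ F x i := by
    intro i
    have := Finset.single_le_sum (f := fun i => max 0 (x i - F x i))
      (fun i _ => le_max_left _ _) (Finset.mem_univ i)
    have h2 := le_max_right 0 (x i - F x i)
    linarith
  refine ⟨x, hx, ?_⟩
  have h1 := hx.2
  have h2 := (hmap x hx).2
  have h3 := (Finset.sum_eq_sum_iff_of_le (fun i _ => hxF i)).1 (h1.trans h2.symm)
  ext i
  exact (h3 i (Finset.mem_univ i)).symm

/-- weighted welfare of the `j`-th allocation -/
noncomputable def welf {n k : ℕ} (V : Fin n → Fin k → Fin n → ℝ) (μ : Fin n → ℝ) (j : Fin k) : ℝ :=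
  ∑ i, μ i * V i j i

/-- total envy of player `i` -/
noncomputable def envy {n k : ℕ} (V : Fin n → Fin k → Fin n → ℝ) (p : Fin k → ℝ) (i : Fin n) : ℝ :=
  ∑ h, max 0 (∑ j, p j * V i j h - ∑ j, p j * V i j i)

lemma envy_nonneg {n k : ℕ} (V : Fin n → Fin k → Fin n → ℝ) (p : Fin k → ℝ) (i : Fin n) :
    0 ≤ envy V p i := Finset.sum_nonneg (fun _ _ => le_max_left _ _)

lemma welf_cont {n k : ℕ} (V : Fin n → Fin k → Fin n → ℝ) (j : Fin k) :
    Continuous (fun μ => welf V μ j) := by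
  unfold welf; fun_prop

lemma envy_cont {n k : ℕ} (V : Fin n → Fin k → Fin n → ℝ) (i : Fin n) :
    Continuous (fun p => envy V p i) := by
  unfold envy; fun_prop

lemma step1 {n k : ℕ} (i0 : Fin n) (j0 : Fin k) (V : Fin n → Fin k → Fin n → ℝ) (ε : ℝ) (K : ℝ)
    (hK : 0 < K) : ∃ z ∈ stdSimplex ℝ (Fin n) ×ˢ stdSimplex ℝ (Fin k),
      (∀ j l, z.2 j * (welf V (fun i => z.1 i + ε) l - welf V (fun i => z.1 i + ε) j) ≤ 1 / K) ∧
      ∀ i, envy V z.2 i = z.1 i * ∑ l, envy V z.2 l := by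
  let w : (Fin n → ℝ) → Fin k → ℝ := fun x j => welf V (fun i => x i + ε) j
  have hw : ∀ j, Continuous (fun x => w x j) := fun j =>
    (welf_cont V j).comp (by fun_prop)
  let Z : (Fin n → ℝ) → ℝ := fun x => ∑ j, Real.exp (K * w x j)
  have hZ : ∀ x, 0 < Z x := fun x =>
    Finset.sum_pos (fun _ _ => Real.exp_pos _) ⟨j0, Finset.mem_univ _⟩
  let P : (Fin n → ℝ) → Fin k → ℝ := fun x j => Real.exp (K * w x j) / Z x
  have hZc : Continuous Z := by
    apply continuous_finsetSum
    intro j _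
    exact Real.continuous_exp.comp (continuous_const.mul (hw j))
  have hPc : Continuous P := by
    apply continuous_pi
    intro j
    exact (Real.continuous_exp.comp (continuous_const.mul (hw j))).div hZc (fun x => (hZ x).ne')
  have hP : ∀ x, P x ∈ stdSimplex ℝ (Fin k) := by
    intro x
    refine ⟨fun j => (div_pos (Real.exp_pos _) (hZ x)).le, ?_⟩
    show ∑ j, Real.exp (K * w x j) / Z x = 1
    rw [← Finset.sum_div]
    exact div_self (hZ x).ne'
  let S : (Fin n → ℝ) → ℝ := fun x => ∑ l, envy V (P x) l
  have hS : ∀ x, 0 ≤ S x := fun x => Finset.sum_nonneg (fun l _ => envy_nonneg V _ l)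
  have hSc : Continuous S := by
    apply continuous_finsetSum
    intro l _
    exact (envy_cont V l).comp hPc
  let F : (Fin n → ℝ) → (Fin n → ℝ) := fun x i => (x i + envy V (P x) i) / (1 + S x)
  have hFc : Continuous F := by
    apply continuous_pi
    intro i
    apply Continuous.div
    · exact (continuous_apply i).add ((envy_cont V i).comp hPc)
    · exact continuous_const.add hSc
    · intro x
      have := hS x
      positivity
  obtain ⟨x, hx, hFx⟩ := brouwer_simplex i0 F hFc (by
    intro x hx
    have hSx := hS x
    refine ⟨fun i => div_nonneg (add_nonneg (hx.1 i) (envy_nonneg V _ i)) (by positivity), ?_⟩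
    show ∑ i, (x i + envy V (P x) i) / (1 + S x) = 1
    rw [← Finset.sum_div, Finset.sum_add_distrib, hx.2]
    exact div_self (by positivity))
  refine ⟨(x, P x), ⟨hx, hP x⟩, fun j l => ?_, fun i => ?_⟩
  · show P x j * (w x l - w x j) ≤ 1 / K
    rcases le_or_gt (w x l - w x j) 0 with h | h
    · exact (mul_nonpos_of_nonneg_of_nonpos ((hP x).1 j) h).trans (by positivity)
    · have h1 : P x j ≤ Real.exp (K * w x j) / Real.exp (K * w x l) := by
        apply div_le_div_of_nonneg_left (Real.exp_pos _).le (Real.exp_pos _)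
        exact Finset.single_le_sum (f := fun j => Real.exp (K * w x j))
          (fun _ _ => (Real.exp_pos _).le) (Finset.mem_univ l)
      rw [← Real.exp_sub] at h1
      set d := w x l - w x j with hd
      have h2 : K * w x j - K * w x l = -(K * d) := by rw [hd]; ring
      rw [h2, Real.exp_neg] at h1
      have h3 : K * d ≤ Real.exp (K * d) := by
        have := Real.add_one_le_exp (K * d)
        linarith
      have h4 : P x j ≤ (K * d)⁻¹ := h1.trans (inv_anti₀ (by positivity) h3)
      calc P x j * d ≤ (K * d)⁻¹ * d := by gcongr
        _ = 1 / K := by field_simp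
  · have h1 : (x i + envy V (P x) i) / (1 + S x) = x i := congrFun hFx i
    have hSx := hS x
    rw [div_eq_iff (by positivity)] at h1
    show envy V (P x) i = x i * S x
    linarith

lemma step2 {n k : ℕ} (i0 : Fin n) (j0 : Fin k) (V : Fin n → Fin k → Fin n → ℝ) (ε : ℝ) :
    ∃ z ∈ stdSimplex ℝ (Fin n) ×ˢ stdSimplex ℝ (Fin k),
      (∀ j l, z.2 j * (welf V (fun i => z.1 i + ε) l - welf V (fun i => z.1 i + ε) j) ≤ 0) ∧
      ∀ i, envy V z.2 i = z.1 i * ∑ l, envy V z.2 l := by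
  have h := fun m : ℕ => step1 i0 j0 V ε (m + 1) (by positivity)
  choose z hz hz1 hz2 using h
  have hcomp : IsCompact (stdSimplex ℝ (Fin n) ×ˢ stdSimplex ℝ (Fin k)) :=
    (isCompact_stdSimplex ℝ (Fin n)).prod (isCompact_stdSimplex ℝ (Fin k))
  obtain ⟨y, hy, φ, hφ, hlim⟩ := hcomp.tendsto_subseq hz
  refine ⟨y, hy, fun j l => ?_, fun i => ?_⟩
  · have hc : Continuous (fun z : (Fin n → ℝ) × (Fin k → ℝ) => z.2 j *
        (welf V (fun i => z.1 i + ε) l - welf V (fun i => z.1 i + ε) j)) := by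
      unfold welf; fun_prop
    have h0 : Filter.Tendsto (fun m : ℕ => 1 / ((φ m : ℕ) + 1 : ℝ)) Filter.atTop (nhds 0) :=
      tendsto_one_div_add_atTop_nhds_zero_nat.comp hφ.tendsto_atTop
    exact le_of_tendsto_of_tendsto' ((hc.tendsto y).comp hlim) h0 (fun m => hz1 (φ m) j l)
  · have hc1 : Continuous (fun z : (Fin n → ℝ) × (Fin k → ℝ) => envy V z.2 i) := by
      unfold envy; fun_prop
    have hc2 : Continuous (fun z : (Fin n → ℝ) × (Fin k → ℝ) => z.1 i * ∑ l, envy V z.2 l) := by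
      unfold envy; fun_prop
    exact tendsto_nhds_unique ((hc1.tendsto y).comp hlim)
      (((hc2.tendsto y).comp hlim).congr (fun m => (hz2 (φ m) i).symm))

/-- the limit where the weight perturbation tends to zero -/
lemma step3 {n k : ℕ} (i0 : Fin n) (j0 : Fin k) (V : Fin n → Fin k → Fin n → ℝ) :
    ∃ x ∈ stdSimplex ℝ (Fin n), ∃ p ∈ stdSimplex ℝ (Fin k),
      (∀ j l, p j * (welf V x l - welf V x j) ≤ 0) ∧
      (∀ i, envy V p i = x i * ∑ l, envy V p l) ∧
      ∃ μ : Fin n → ℝ, (∀ i, 0 < μ i) ∧ ∃ p' ∈ stdSimplex ℝ (Fin k),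
        (∀ j l, p' j * (welf V μ l - welf V μ j) ≤ 0) ∧ ∀ j, p j / 2 ≤ p' j := by
  have h := fun m : ℕ => step2 i0 j0 V (1 / ((m : ℝ) + 1))
  choose z hz hz1 hz2 using h
  have hcomp : IsCompact (stdSimplex ℝ (Fin n) ×ˢ stdSimplex ℝ (Fin k)) :=
    (isCompact_stdSimplex ℝ (Fin n)).prod (isCompact_stdSimplex ℝ (Fin k))
  obtain ⟨y, hy, φ, hφ, hlim⟩ := hcomp.tendsto_subseq hz
  refine ⟨y.1, hy.1, y.2, hy.2, fun j l => ?_, fun i => ?_, ?_⟩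
  · have hc : Continuous (fun z : ((Fin n → ℝ) × (Fin k → ℝ)) × ℝ => z.1.2 j *
        (welf V (fun i => z.1.1 i + z.2) l - welf V (fun i => z.1.1 i + z.2) j)) := by
      unfold welf; fun_prop
    have h0 : Filter.Tendsto (fun m : ℕ => 1 / ((φ m : ℕ) + 1 : ℝ)) Filter.atTop (nhds 0) :=
      tendsto_one_div_add_atTop_nhds_zero_nat.comp hφ.tendsto_atTop
    have := le_of_tendsto' ((hc.tendsto (y, 0)).comp (hlim.prodMk_nhds h0))
      (fun m => hz1 (φ m) j l)
    simpa using this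
  · have hc1 : Continuous (fun z : (Fin n → ℝ) × (Fin k → ℝ) => envy V z.2 i) := by
      unfold envy; fun_prop
    have hc2 : Continuous (fun z : (Fin n → ℝ) × (Fin k → ℝ) => z.1 i * ∑ l, envy V z.2 l) := by
      unfold envy; fun_prop
    exact tendsto_nhds_unique ((hc1.tendsto y).comp hlim)
      (((hc2.tendsto y).comp hlim).congr (fun m => (hz2 (φ m) i).symm))
  · have hev : ∀ᶠ m in Filter.atTop, ∀ j, y.2 j / 2 ≤ (z (φ m)).2 j := by
      rw [Filter.eventually_all]
      intro j
      rcases (hy.2.1 j).eq_or_lt with h | h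
      · exact Filter.Eventually.of_forall (fun m => by
          rw [← h, zero_div]; exact (hz (φ m)).2.1 j)
      · have hc1 : Continuous (fun z : (Fin n → ℝ) × (Fin k → ℝ) => z.2 j) := by fun_prop
        have := ((hc1.tendsto y).comp hlim).eventually_const_lt (half_lt_self h)
        exact this.mono (fun m hm => hm.le)
    obtain ⟨m, hm⟩ := hev.exists
    refine ⟨fun i => (z (φ m)).1 i + 1 / ((φ m : ℝ) + 1), fun i => ?_, (z (φ m)).2, (hz (φ m)).2,
      hz1 (φ m), hm⟩
    have := (hz (φ m)).1.1 i
    positivity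

/-- the Pareto part -/
lemma pareto_part {n k : ℕ} (V : Fin n → Fin k → Fin n → ℝ) (p : Fin k → ℝ)
    (hp : p ∈ stdSimplex ℝ (Fin k)) (μ : Fin n → ℝ) (hμ : ∀ i, 0 < μ i) (p' : Fin k → ℝ)
    (hp' : p' ∈ stdSimplex ℝ (Fin k)) (hopt : ∀ j l, p' j * (welf V μ l - welf V μ j) ≤ 0)
    (hpp : ∀ j, p j / 2 ≤ p' j) :
    ¬ ∃ q : Fin k → ℝ, (∀ j, 0 ≤ q j) ∧ (∑ j, q j = 1) ∧
        (∀ i, ∑ j, p j * V i j i ≤ ∑ j, q j * V i j i) ∧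
        (∃ i, ∑ j, p j * V i j i < ∑ j, q j * V i j i) := by
  rintro ⟨q, hq0, hq1, hle, i1, hlt⟩
  have hexch : ∀ s : Fin k → ℝ, ∑ j, s j * welf V μ j = ∑ i, μ i * ∑ j, s j * V i j i := by
    intro s
    simp only [welf, Finset.mul_sum]
    rw [Finset.sum_comm]
    exact Finset.sum_congr rfl fun i _ => Finset.sum_congr rfl fun j _ => by ring
  have h1 : ∑ j, p j * welf V μ j < ∑ j, q j * welf V μ j := by
    rw [hexch, hexch]
    apply Finset.sum_lt_sum
    · intro i _
      exact mul_le_mul_of_nonneg_left (hle i) (hμ i).le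
    · exact ⟨i1, Finset.mem_univ _, mul_lt_mul_of_pos_left hlt (hμ i1)⟩
  have h2 : ∀ l, welf V μ l ≤ ∑ j, p' j * welf V μ j := by
    intro l
    have : ∑ j, p' j * (welf V μ l - welf V μ j) ≤ 0 := Finset.sum_nonpos (fun j _ => hopt j l)
    simp only [mul_sub, Finset.sum_sub_distrib] at this
    rw [← Finset.sum_mul, hp'.2] at this
    linarith
  set B := ∑ j, p' j * welf V μ j with hB
  have h3 : ∑ j, (p' j + (q j - p j) / 2) * welf V μ j ≤
      ∑ j, (p' j + (q j - p j) / 2) * B := by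
    apply Finset.sum_le_sum
    intro j _
    apply mul_le_mul_of_nonneg_left (h2 j)
    have := hpp j
    have := hq0 j
    linarith
  have h4 : ∑ j, (p' j + (q j - p j) / 2) = 1 := by
    rw [Finset.sum_add_distrib, ← Finset.sum_div, Finset.sum_sub_distrib, hp'.2, hq1, hp.2]
    norm_num
  rw [← Finset.sum_mul, h4] at h3
  have h5 : ∑ j, (p' j + (q j - p j) / 2) * welf V μ j =
      B + (∑ j, q j * welf V μ j - ∑ j, p j * welf V μ j) / 2 := by
    rw [hB, ← Finset.sum_sub_distrib, Finset.sum_div, ← Finset.sum_add_distrib]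
    exact Finset.sum_congr rfl fun j _ => by ring
  linarith

/-- A self-map of a finite type preserving a nonempty predicate restricts to a permutation. -/
lemma exists_perm_of_map {n : ℕ} (f : Fin n → Fin n) (P : Fin n → Prop)
    (hf : ∀ i, P i → P (f i)) (i0 : Fin n) (h0 : P i0) :
    ∃ σ : Equiv.Perm (Fin n), (∀ i, σ i = f i ∨ σ i = i) ∧ ∃ i, P i ∧ σ i = f i := by
  classical
  have hbij := Function.bijOn_periodicPts (f := f)
  let g : Fin n → Fin n := fun i => if i ∈ Function.periodicPts f then f i else i
  have hg : Function.Injective g := by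
    intro a b hab
    simp only [g] at hab
    split_ifs at hab with h1 h2 h2
    · exact hbij.injOn h1 h2 hab
    · exact absurd (hab ▸ hbij.mapsTo h1) h2
    · exact absurd (hab ▸ hbij.mapsTo h2) h1
    · exact hab
  have hper : ∃ i, P i ∧ i ∈ Function.periodicPts f := by
    obtain ⟨a, b, hab, heq⟩ := Finite.exists_ne_map_eq_of_infinite (fun m : ℕ => f^[m] i0)
    have hP : ∀ m, P (f^[m] i0) := by
      intro m
      induction m with
      | zero => exact h0
      | succ m ih => rw [Function.iterate_succ_apply']; exact hf _ ih
    have key : ∀ a b, a < b → f^[a] i0 = f^[b] i0 → f^[a] i0 ∈ Function.periodicPts f := by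
      intro a b hab heq
      refine Function.mk_mem_periodicPts (n := b - a) (by omega) ?_
      show f^[b - a] (f^[a] i0) = f^[a] i0
      rw [← Function.iterate_add_apply, Nat.sub_add_cancel hab.le, heq]
    rcases lt_or_gt_of_ne hab with h | h
    · exact ⟨_, hP a, key a b h heq⟩
    · exact ⟨_, hP b, key b a h heq.symm⟩
  refine ⟨Equiv.ofBijective g ((Finite.injective_iff_bijective).1 hg), fun i => ?_, ?_⟩
  · show g i = f i ∨ g i = i
    simp only [g]
    split_ifs
    · exact Or.inl rfl
    · exact Or.inr rfl
  · obtain ⟨i, hi, hi2⟩ := hper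
    exact ⟨i, hi, by show g i = f i; simp [g, hi2]⟩

/-- the envy-freeness part -/
lemma envy_part {n k : ℕ} (V : Fin n → Fin k → Fin n → ℝ)
    (hperm : ∀ (σ : Equiv.Perm (Fin n)) (j : Fin k), ∃ l, ∀ i, V i l i = V i j (σ i))
    (x : Fin n → ℝ) (hx : x ∈ stdSimplex ℝ (Fin n)) (p : Fin k → ℝ)
    (hp : p ∈ stdSimplex ℝ (Fin k)) (hopt : ∀ j l, p j * (welf V x l - welf V x j) ≤ 0)
    (hfix : ∀ i, envy V p i = x i * ∑ l, envy V p l) (i h : Fin n) :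
    ∑ j, p j * V i j h ≤ ∑ j, p j * V i j i := by
  classical
  let e : Fin n → Fin n → ℝ := fun i h => ∑ j, p j * V i j h - ∑ j, p j * V i j i
  have hσ : ∀ σ : Equiv.Perm (Fin n), ∑ i, x i * e i (σ i) ≤ 0 := by
    intro σ
    have h1 : ∑ i, x i * e i (σ i) = ∑ j, p j * ∑ i, x i * (V i j (σ i) - V i j i) := by
      simp only [e, Finset.mul_sum, ← Finset.sum_sub_distrib]
      rw [Finset.sum_comm]
      exact Finset.sum_congr rfl fun i _ => Finset.sum_congr rfl fun j _ => by ring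
    rw [h1]
    apply Finset.sum_nonpos
    intro j _
    obtain ⟨l, hl⟩ := hperm σ j
    have h2 : ∑ i, x i * (V i j (σ i) - V i j i) = welf V x l - welf V x j := by
      simp only [welf, ← Finset.sum_sub_distrib, hl]
      exact Finset.sum_congr rfl fun i _ => by ring
    rw [h2]
    exact hopt j l
  have hee : ∀ i, e i i = 0 := fun i => sub_self _
  have hS0 : ∑ l, envy V p l ≤ 0 := by
    by_contra hS
    push Not at hS
    have hex : ∀ i, ∃ h, 0 < x i → 0 < e i h := by
      intro i
      by_cases hxi : 0 < x i
      · by_contra hcon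
        push Not at hcon
        have h1 : envy V p i = 0 := Finset.sum_eq_zero (fun h _ => max_eq_left (hcon h).2)
        rw [hfix i] at h1
        have := mul_pos hxi hS
        linarith
      · exact ⟨i, fun h => absurd h hxi⟩
    choose f hf using hex
    have hmapsto : ∀ i, 0 < x i → 0 < x (f i) := by
      intro i hi
      by_contra hcon
      have hz : x (f i) = 0 := le_antisymm (not_lt.1 hcon) (hx.1 _)
      have h1 := hσ (Equiv.swap i (f i))
      have h2 : x i * e i (f i) ≤ ∑ l, x l * e l (Equiv.swap i (f i) l) := by
        have h3 := Finset.single_le_sum (f := fun l => x l * e l (Equiv.swap i (f i) l))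
          (s := Finset.univ) (fun l _ => ?_) (Finset.mem_univ i)
        · simpa using h3
        · show 0 ≤ x l * e l (Equiv.swap i (f i) l)
          by_cases hl : l = i
          · subst hl
            rw [Equiv.swap_apply_left]
            exact (mul_pos hi (hf l hi)).le
          · by_cases hl2 : l = f i
            · rw [hl2, hz, zero_mul]
            · rw [Equiv.swap_apply_of_ne_of_ne hl hl2, hee, mul_zero]
      have := mul_pos hi (hf i hi)
      linarith
    obtain ⟨i0, hi0⟩ : ∃ i, 0 < x i := by
      by_contra hcon
      push Not at hcon
      have := Finset.sum_nonpos (fun i (_ : i ∈ Finset.univ) => hcon i)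
      rw [hx.2] at this
      linarith
    obtain ⟨σ, h1, i, hi, hi2⟩ := exists_perm_of_map f (fun i => 0 < x i) hmapsto i0 hi0
    have h2 : 0 < ∑ l, x l * e l (σ l) := by
      apply Finset.sum_pos'
      · intro l _
        rcases h1 l with h | h
        · rw [h]
          rcases (hx.1 l).eq_or_lt with h0 | h0
          · rw [← h0, zero_mul]
          · exact (mul_pos h0 (hf l h0)).le
        · rw [h, hee, mul_zero]
      · exact ⟨i, Finset.mem_univ _, by rw [hi2]; exact mul_pos hi (hf i hi)⟩
    have := hσ σ
    linarith
  have h1 : envy V p i ≤ 0 := (Finset.single_le_sum (f := envy V p)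
    (fun l _ => envy_nonneg V p l) (Finset.mem_univ i)).trans hS0
  have h2 : max 0 (e i h) ≤ envy V p i := Finset.single_le_sum (f := fun h => max 0 (e i h))
    (fun l _ => le_max_left _ _) (Finset.mem_univ h)
  have h3 : e i h ≤ 0 := (le_max_right _ _).trans (h2.trans h1)
  have h4 : e i h = ∑ j, p j * V i j h - ∑ j, p j * V i j i := rfl
  linarith

lemma perm_of_swap {n m k : ℕ} (A : Fin k → Fin n → Finset (Fin m))
    (hswap : ∀ j : Fin k, ∀ g h : Fin n, ∃ l : Fin k,
      (∀ i, i ≠ g → i ≠ h → A l i = A j i) ∧ A l g = A j h ∧ A l h = A j g)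
    (σ : Equiv.Perm (Fin n)) : ∀ j, ∃ l, ∀ i, A l i = A j (σ i) := by
  induction σ using Equiv.Perm.swap_induction_on' with
  | one => exact fun j => ⟨j, fun i => rfl⟩
  | mul_swap σ a b hab ih =>
    intro j
    obtain ⟨l, hl⟩ := ih j
    obtain ⟨l', h1, h2, h3⟩ := hswap l a b
    refine ⟨l', fun i => ?_⟩
    rw [Equiv.Perm.mul_apply]
    by_cases hia : i = a
    · rw [hia, h2, hl, Equiv.swap_apply_left]
    · by_cases hib : i = b
      · rw [hib, h3, hl, Equiv.swap_apply_right]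
      · rw [h1 i hia hib, hl, Equiv.swap_apply_of_ne_of_ne hia hib]

/-- Main theorem: If the allocation set is swappable, then there
exists a mixed allocation that is both Pareto Efficient and envy-free. -/
theorem stmt11 {n m k : ℕ} (hk : 0 < k)
    (A : Fin k → Fin n → Finset (Fin m))
    (hdisj : ∀ j : Fin k, ∀ i i' : Fin n, i ≠ i' → Disjoint (A j i) (A j i'))
    (u : Fin n → Finset (Fin m) → ℝ)
    (hswap : ∀ j : Fin k, ∀ g h : Fin n, ∃ l : Fin k,
      (∀ i, i ≠ g → i ≠ h → A l i = A j i) ∧ A l g = A j h ∧ A l h = A j g) :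
    ∃ p : Fin k → ℝ, (∀ j, 0 ≤ p j) ∧ (∑ j, p j = 1) ∧
      (¬ ∃ q : Fin k → ℝ, (∀ j, 0 ≤ q j) ∧ (∑ j, q j = 1) ∧
        (∀ i, ∑ j, p j * u i (A j i) ≤ ∑ j, q j * u i (A j i)) ∧
        (∃ i, ∑ j, p j * u i (A j i) < ∑ j, q j * u i (A j i))) ∧
      (∀ i h : Fin n, ∑ j, p j * u i (A j h) ≤ ∑ j, p j * u i (A j i)) := by
  classical
  rcases Nat.eq_zero_or_pos n with hn | hn
  · subst hn
    have hs := single_mem_stdSimplex ℝ (⟨0, hk⟩ : Fin k)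
    refine ⟨_, hs.1, hs.2, ?_, fun i => i.elim0⟩
    rintro ⟨q, -, -, -, i, -⟩
    exact i.elim0
  · let V : Fin n → Fin k → Fin n → ℝ := fun i j h => u i (A j h)
    obtain ⟨x, hx, p, hp, hopt, hfix, μ, hμ, p', hp', hopt', hpp⟩ :=
      step3 (⟨0, hn⟩ : Fin n) (⟨0, hk⟩ : Fin k) V
    refine ⟨p, hp.1, hp.2, pareto_part V p hp μ hμ p' hp' hopt' hpp, fun i h => ?_⟩
    refine envy_part V (fun σ j => ?_) x hx p hp hopt hfix i h
    obtain ⟨l, hl⟩ := perm_of_swap A hswap σ j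
    exact ⟨l, fun i => by show u i (A l i) = u i (A j (σ i)); rw [hl]⟩
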